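/- Let $(\mu_n)$ be a sequence of Borel probability measures on $\mathbb{R}$ with all moments finite, and suppose there exist $d_0 > 0$, $t \in [0,1]$ such that for every $\varepsilon > 0$ there is $K_0(\varepsilon)$ with $\left|\int x^k d\mu_n\right| \leq d_0^k(\varepsilon k)^{kt}$ for all $k, n \geq K_0(\varepsilon)$. If $\mu$ is a probability measure with moments $M^{(k)} = \lim_{n\to\infty}\int x^k d\mu_n$ for all $k$, then $\mu_n$ converges weakly to $\mu$. -/

import Mathlib

open MeasureTheory Filter

/-!
For a finite measure `ν` with finite moments, the Taylor polynomial at `0` of the characteristic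
function is determined by finitely many moments, and for even `N` the remainder of order `N` at `θ`
is at most `|θ| ^ N / N! * ∫ x ^ N ∂ν`. This remainder bound is itself a multiple of a moment, so
along a sequence with converging moments it converges to the bound for the limit measure `μ`. Hence
pointwise convergence of the characteristic functions, and with it weak convergence by Lévy's
theorem, only requires `|θ| ^ N / N! * ∫ x ^ N ∂μ → 0`. By `N ^ N / N! ≤ exp N` this holds when
the `N`-th moment of `μ` is at most `(ε * N) ^ N` eventually, for every `ε > 0`.
-/

open scoped Nat Topology

section Taylor

variable {E : Type*} [NormedAddCommGroup E] [NormedSpace ℝ E] {f : ℝ → E} {n : ℕ} {x₀ : ℝ}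

lemma taylorWithinEval_eq_taylorWithinEval_univ {s : Set ℝ} (hs : UniqueDiffOn ℝ s)
    (hx₀ : x₀ ∈ s) (hf : ContDiffAt ℝ n f x₀) (x : ℝ) :
    taylorWithinEval f n s x₀ x = taylorWithinEval f n Set.univ x₀ x := by
  simp_rw [taylor_within_apply, iteratedDerivWithin_univ]
  refine Finset.sum_congr rfl fun k hk ↦ ?_
  have hkn : k ≤ n := Nat.lt_succ_iff.1 (Finset.mem_range.1 hk)
  rw [iteratedDerivWithin_eq_iteratedDeriv hs (hf.of_le (mod_cast hkn)) hx₀]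

lemma norm_sub_taylorWithinEval_univ_le [CompleteSpace E] {C : ℝ}
    (hf : ContDiff ℝ (n + 1 : ℕ) f) (hC : ∀ y, ‖iteratedDeriv (n + 1) f y‖ ≤ C) (x : ℝ) :
    ‖f x - taylorWithinEval f n Set.univ x₀ x‖ ≤ C * (|x - x₀| ^ (n + 1) / (n + 1)!) := by
  rcases eq_or_ne x₀ x with rfl | hne
  · simp
  have hunique : UniqueDiffOn ℝ (Set.uIcc x₀ x) := uniqueDiffOn_uIcc hne
  rw [← taylorWithinEval_eq_taylorWithinEval_univ hunique Set.left_mem_uIcc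
      (hf.contDiffAt.of_le (mod_cast n.le_succ)),
    taylor_integral_remainder hf.contDiffOn, intervalIntegral.norm_intervalIntegral_eq,
    Set.uIoc_comm]
  have hintegrand : ∀ y ∈ Set.uIoc x x₀,
      ‖((x - y) ^ n / n !) • iteratedDerivWithin (n + 1) f (Set.uIcc x₀ x) y‖
        ≤ C / n ! * |y - x| ^ n := fun y hy ↦ by
    rw [iteratedDerivWithin_eq_iteratedDeriv hunique hf.contDiffAt
      (Set.uIcc_comm x x₀ ▸ Set.uIoc_subset_uIcc hy), norm_smul, norm_div, norm_pow,
      Real.norm_eq_abs, abs_sub_comm, Real.norm_natCast]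
    calc |y - x| ^ n / n ! * ‖iteratedDeriv (n + 1) f y‖ ≤ |y - x| ^ n / n ! * C := by
          gcongr; exact hC y
      _ = C / n ! * |y - x| ^ n := by ring
  have hintegrable : IntegrableOn (fun y ↦ C / n ! * |y - x| ^ n) (Set.uIoc x x₀) :=
    (Continuous.integrableOn_uIcc (by fun_prop)).mono_set Set.uIoc_subset_uIcc
  calc _ ≤ ∫ y in Set.uIoc x x₀, C / n ! * |y - x| ^ n :=
        norm_integral_le_of_norm_le hintegrable
          (ae_restrict_of_forall_mem measurableSet_uIoc hintegrand)
    _ = C * (|x - x₀| ^ (n + 1) / (n + 1)!) := by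
        rw [integral_const_mul, integral_pow_abs_sub_uIoc, abs_sub_comm, Nat.factorial_succ]
        push_cast
        field_simp

end Taylor

section CharFun

variable {ν : Measure ℝ}

lemma memLp_id_of_integrable_pow {k : ℕ} (h : Integrable (fun x : ℝ ↦ x ^ k) ν) : MemLp id k ν := by
  rcases eq_or_ne k 0 with rfl | hk
  · simpa using aestronglyMeasurable_id
  · rw [← integrable_norm_rpow_iff aestronglyMeasurable_id (mod_cast hk) (by simp)]
    simpa using h.norm

lemma norm_iteratedDeriv_charFun_le [IsFiniteMeasure ν] {n : ℕ} (h : MemLp id n ν) (θ : ℝ) :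
    ‖iteratedDeriv n (charFun ν) θ‖ ≤ ∫ x, |x| ^ n ∂ν := by
  rw [iteratedDeriv_charFun h, norm_mul, norm_pow, Complex.norm_I, one_pow, one_mul]
  refine (norm_integral_le_integral_norm _).trans_eq (integral_congr_ae (.of_forall fun x ↦ ?_))
  simp [Complex.norm_exp]

lemma norm_charFun_sub_sum_moments_le [IsFiniteMeasure ν] {n : ℕ}
    (h : MemLp id (n + 1 : ℕ) ν) (θ : ℝ) :
    ‖charFun ν θ - ∑ k ∈ Finset.range (n + 1),
        (k ! : ℂ)⁻¹ * (θ * Complex.I) ^ k * (∫ x, x ^ k ∂ν : ℝ)‖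
      ≤ (∫ x, |x| ^ (n + 1) ∂ν) * (|θ| ^ (n + 1) / (n + 1)!) := by
  rw [← taylorWithinEval_charFun_zero (h.mono_exponent (mod_cast n.le_succ))]
  simpa using norm_sub_taylorWithinEval_univ_le (x₀ := 0) (contDiff_charFun h)
    (norm_iteratedDeriv_charFun_le h) θ

end CharFun

lemma tendsto_of_dist_approx_le {ι α : Type*} [PseudoMetricSpace α] {l : Filter ι}
    {F : ι → α} {a : α} {S : ℕ → ι → α} {s : ℕ → α} {R : ℕ → ι → ℝ} {r : ℕ → ℝ}
    (hF : ∀ m i, dist (F i) (S m i) ≤ R m i) (ha : ∀ m, dist a (s m) ≤ r m)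
    (hS : ∀ m, Tendsto (S m) l (𝓝 (s m))) (hR : ∀ m, Tendsto (R m) l (𝓝 (r m)))
    (hr : Tendsto r atTop (𝓝 0)) : Tendsto F l (𝓝 a) := by
  refine Metric.tendsto_nhds.2 fun ε hε ↦ ?_
  obtain ⟨m, hm⟩ := (hr.eventually_lt_const (by positivity : 0 < ε / 3)).exists
  filter_upwards [(hR m).eventually_lt_const hm,
    Metric.tendsto_nhds.1 (hS m) (ε / 3) (by positivity)] with i hRi hSi
  calc dist (F i) a ≤ dist (F i) (S m i) + dist (S m i) (s m) + dist (s m) a := dist_triangle4 ..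
    _ < ε / 3 + ε / 3 + ε / 3 := by
        rw [dist_comm (s m) a]
        gcongr
        exacts [(hF m i).trans_lt hRi, (ha m).trans_lt hm]
    _ = ε := by ring

lemma tendsto_charFun_of_tendsto_moments {ι : Type*} {l : Filter ι} {μs : ι → Measure ℝ}
    [∀ i, IsFiniteMeasure (μs i)] {μ : Measure ℝ} [IsFiniteMeasure μ]
    (hμs : ∀ i (k : ℕ), MemLp id k (μs i)) (hμ : ∀ k : ℕ, MemLp id k μ)
    (hlim : ∀ k : ℕ, Tendsto (fun i ↦ ∫ x, x ^ k ∂μs i) l (𝓝 (∫ x, x ^ k ∂μ))) {θ : ℝ}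
    (hθ : Tendsto (fun k : ℕ ↦ (∫ x, x ^ k ∂μ) * (θ ^ k / k !)) atTop (𝓝 0)) :
    Tendsto (fun i ↦ charFun (μs i) θ) l (𝓝 (charFun μ θ)) := by
  let taylorSum (m : ℕ) (ν : Measure ℝ) : ℂ := ∑ k ∈ Finset.range (2 * m + 1 + 1),
    (k ! : ℂ)⁻¹ * (θ * Complex.I) ^ k * (∫ x, x ^ k ∂ν : ℝ)
  let remainder (m : ℕ) (ν : Measure ℝ) : ℝ :=
    (∫ x, x ^ (2 * m + 1 + 1) ∂ν) * (θ ^ (2 * m + 1 + 1) / (2 * m + 1 + 1)!)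
  have hdist (ν : Measure ℝ) [IsFiniteMeasure ν] (hν : ∀ k : ℕ, MemLp id k ν) (m : ℕ) :
      dist (charFun ν θ) (taylorSum m ν) ≤ remainder m ν := by
    have heven : Even (2 * m + 1 + 1) := by grind
    simpa only [dist_eq_norm, heven.pow_abs, taylorSum, remainder] using
      norm_charFun_sub_sum_moments_le (hν (2 * m + 1 + 1)) θ
  refine tendsto_of_dist_approx_le (S := fun m i ↦ taylorSum m (μs i)) (s := (taylorSum · μ))
    (R := fun m i ↦ remainder m (μs i)) (r := (remainder · μ))
    (fun m i ↦ hdist (μs i) (hμs i) m) (hdist μ hμ) (fun m ↦ ?_) (fun m ↦ (hlim _).mul_const _) ?_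
  · exact tendsto_finsetSum _ fun k _ ↦
      ((Complex.continuous_ofReal.tendsto _).comp (hlim k)).const_mul _
  · exact hθ.comp (tendsto_atTop_mono (fun m ↦ by dsimp only [id]; omega) tendsto_id)

section Growth

variable {a : ℕ → ℝ}

lemma eventually_abs_le_of_tendsto {A : ℕ → ℕ → ℝ} {b : ℕ → ℝ}
    (hA : ∀ k, Tendsto (A k) atTop (𝓝 (a k)))
    (hb : ∃ K, ∀ k n, K ≤ k → K ≤ n → |A k n| ≤ b k) : ∀ᶠ k in atTop, |a k| ≤ b k := by
  obtain ⟨K, hK⟩ := hb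
  filter_upwards [eventually_ge_atTop K] with k hk
  exact le_of_tendsto (hA k).abs ((eventually_ge_atTop K).mono fun n ↦ hK k n hk)

lemma mul_pow_div_factorial_le (k : ℕ) {c : ℝ} (hc : 0 ≤ c) :
    (c * k) ^ k / k ! ≤ (c * Real.exp 1) ^ k := by
  rw [mul_pow, mul_pow, mul_div_assoc, ← Real.exp_nat_mul, mul_one]
  gcongr
  exact Real.pow_div_factorial_le_exp _ k.cast_nonneg k

lemma tendsto_mul_pow_div_factorial_zero
    (ha : ∀ ε > 0, ∀ᶠ k : ℕ in atTop, |a k| ≤ (ε * k) ^ k) (r : ℝ) :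
    Tendsto (fun k : ℕ ↦ a k * (r ^ k / k !)) atTop (𝓝 0) := by
  -- Any `ε` with `ε * |r| * exp 1 < 1` would do.
  let ε : ℝ := (2 * (|r| + 1) * Real.exp 1)⁻¹
  have hε : 0 < ε := by positivity
  have hratio : ε * |r| * Real.exp 1 ≤ 1 / 2 := by
    simp only [ε]
    rw [inv_mul_eq_div, div_mul_eq_mul_div, div_le_div_iff₀ (by positivity) two_pos]
    nlinarith [Real.exp_pos 1]
  refine squeeze_zero_norm' ?_ (tendsto_pow_atTop_nhds_zero_of_lt_one (r := 1 / 2)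
    (by norm_num) (by norm_num))
  filter_upwards [ha ε hε] with k hk
  calc ‖a k * (r ^ k / k !)‖ = |a k| * (|r| ^ k / k !) := by simp
    _ ≤ (ε * k) ^ k * (|r| ^ k / k !) := by gcongr
    _ = (ε * |r| * k) ^ k / k ! := by ring
    _ ≤ (ε * |r| * Real.exp 1) ^ k := mul_pow_div_factorial_le k (by positivity)
    _ ≤ (1 / 2) ^ k := by gcongr

lemma eventually_abs_le_mul_pow_of_abs_le_pow_mul_rpow {d t : ℝ} (hd : 0 < d) (ht : t ≤ 1)
    (ha : ∀ ε > 0, ∀ᶠ k : ℕ in atTop, |a k| ≤ d ^ k * (ε * k) ^ (k * t)) :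
    ∀ ε > 0, ∀ᶠ k : ℕ in atTop, |a k| ≤ (ε * k) ^ k := by
  intro ε hε
  filter_upwards [ha (ε / d) (by positivity),
    (tendsto_natCast_atTop_atTop.const_mul_atTop (by positivity : 0 < ε / d)).eventually_ge_atTop 1]
    with k hak hk
  calc |a k| ≤ d ^ k * (ε / d * k) ^ (k * t) := hak
    _ ≤ d ^ k * (ε / d * k) ^ (k : ℝ) := by
        gcongr
        exact mul_le_of_le_one_right k.cast_nonneg ht
    _ = (ε * k) ^ k := by rw [Real.rpow_natCast, ← mul_pow]; field_simp

end Growth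

theorem weak_convergence_from_moment_bounds_general {μs : ℕ → ProbabilityMeasure ℝ}
    {μ : ProbabilityMeasure ℝ} (hμs : ∀ n (k : ℕ), MemLp id k (μs n : Measure ℝ))
    (hμ : ∀ k : ℕ, MemLp id k (μ : Measure ℝ))
    (hlim : ∀ k : ℕ, Tendsto (fun n ↦ ∫ x, x ^ k ∂(μs n : Measure ℝ)) atTop
      (𝓝 (∫ x, x ^ k ∂(μ : Measure ℝ))))
    (hgrowth : ∀ ε > 0, ∀ᶠ k : ℕ in atTop, |∫ x, x ^ k ∂(μ : Measure ℝ)| ≤ (ε * k) ^ k) :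
    Tendsto μs atTop (𝓝 μ) :=
  ProbabilityMeasure.tendsto_of_tendsto_charFun fun θ ↦
    tendsto_charFun_of_tendsto_moments hμs hμ hlim (tendsto_mul_pow_div_factorial_zero hgrowth θ)

theorem weak_convergence_from_moment_bounds
    (μn : ℕ → Measure ℝ) (hμn : ∀ n, IsProbabilityMeasure (μn n))
    (μ : Measure ℝ) (hμ : IsProbabilityMeasure μ)
    (hmomn : ∀ n k : ℕ, Integrable (fun x : ℝ => x ^ k) (μn n))
    (hmom : ∀ k : ℕ, Integrable (fun x : ℝ => x ^ k) μ)
    (d₀ t : ℝ) (hd₀ : 0 < d₀) (ht0 : 0 ≤ t) (ht1 : t ≤ 1)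
    (hbound : ∀ ε : ℝ, 0 < ε → ∃ K₀ : ℕ, ∀ k n : ℕ, K₀ ≤ k → K₀ ≤ n →
      |∫ x : ℝ, x ^ k ∂(μn n)| ≤ d₀ ^ k * (ε * k) ^ ((k : ℝ) * t))
    (M : ℕ → ℝ)
    (hμM : ∀ k : ℕ, (∫ x : ℝ, x ^ k ∂μ) = M k)
    (hlim : ∀ k : ℕ, Tendsto (fun n => ∫ x : ℝ, x ^ k ∂(μn n)) atTop (nhds (M k))) :
    ∀ f : BoundedContinuousFunction ℝ ℝ,
      Tendsto (fun n => ∫ x : ℝ, f x ∂(μn n)) atTop (nhds (∫ x : ℝ, f x ∂μ)) := by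
  simp only [← hμM] at hlim
  exact ProbabilityMeasure.tendsto_iff_forall_integral_tendsto.1 <|
    weak_convergence_from_moment_bounds_general
      (μs := fun n ↦ ⟨μn n, hμn n⟩) (μ := ⟨μ, hμ⟩)
      (fun n k ↦ memLp_id_of_integrable_pow (hmomn n k))
      (fun k ↦ memLp_id_of_integrable_pow (hmom k)) hlim
      (eventually_abs_le_mul_pow_of_abs_le_pow_mul_rpow hd₀ ht1
        fun ε hε ↦ eventually_abs_le_of_tendsto hlim (hbound ε hε))
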